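/- Theta representation and Landen-type identity for S' (formula (n2)): Let τ lie in the complex upper half-plane and let u ∈ ℂ be such that θ₁(u,τ)·θ₄(u,τ) ≠ 0 and θ₁(u, τ/2) ≠ 0. Then ζ₁(u,τ) − ζ₄(u,τ) = π θ₄(0,τ)² · θ₂(u,τ)θ₃(u,τ) / (θ₁(u,τ)θ₄(u,τ)) = π θ₃(0, τ/2)·θ₄(0, τ/2) · θ₂(u, τ/2)/θ₁(u, τ/2). -/

import Mathlib

open Complex

/-- Jacobi theta function θ₁(u,τ). -/
noncomputable def theta1 (u τ : ℂ) : ℂ :=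
  -∑' k : ℤ, Complex.exp ((Real.pi : ℂ) * Complex.I * τ * ((k : ℂ) + 1/2)^2
      + 2 * (Real.pi : ℂ) * Complex.I * (u + 1/2) * ((k : ℂ) + 1/2))

/-- Jacobi theta function θ₂(u,τ). -/
noncomputable def theta2 (u τ : ℂ) : ℂ :=
  ∑' k : ℤ, Complex.exp ((Real.pi : ℂ) * Complex.I * τ * ((k : ℂ) + 1/2)^2
      + 2 * (Real.pi : ℂ) * Complex.I * u * ((k : ℂ) + 1/2))

/-- Jacobi theta function θ₃(u,τ). -/
noncomputable def theta3 (u τ : ℂ) : ℂ :=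
  ∑' k : ℤ, Complex.exp ((Real.pi : ℂ) * Complex.I * τ * (k : ℂ)^2
      + 2 * (Real.pi : ℂ) * Complex.I * u * (k : ℂ))

/-- Jacobi theta function θ₄(u,τ). -/
noncomputable def theta4 (u τ : ℂ) : ℂ :=
  ∑' k : ℤ, Complex.exp ((Real.pi : ℂ) * Complex.I * τ * (k : ℂ)^2
      + 2 * (Real.pi : ℂ) * Complex.I * (u + 1/2) * (k : ℂ))

/-- ζ_a(u,τ) = θ_a'(u,τ)/θ_a(u,τ). -/
noncomputable def zeta1 (u τ : ℂ) : ℂ := deriv (fun v => theta1 v τ) u / theta1 u τ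
noncomputable def zeta2 (u τ : ℂ) : ℂ := deriv (fun v => theta2 v τ) u / theta2 u τ
noncomputable def zeta3 (u τ : ℂ) : ℂ := deriv (fun v => theta3 v τ) u / theta3 u τ
noncomputable def zeta4 (u τ : ℂ) : ℂ := deriv (fun v => theta4 v τ) u / theta4 u τ

/-- ℘_a(u,τ) = −∂_u ζ_a(u,τ). -/
noncomputable def wp1 (u τ : ℂ) : ℂ := -deriv (fun v => zeta1 v τ) u
noncomputable def wp2 (u τ : ℂ) : ℂ := -deriv (fun v => zeta2 v τ) u
noncomputable def wp1' (u τ : ℂ) : ℂ := deriv (fun v => wp1 v τ) u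
noncomputable def wp2' (u τ : ℂ) : ℂ := deriv (fun v => wp2 v τ) u

/-- S'(u,τ) = ζ₁(u,τ) − ζ₄(u,τ). -/
noncomputable def Sp (u τ : ℂ) : ℂ := zeta1 u τ - zeta4 u τ
/-- S''(u,τ) = ∂_u S'(u,τ). -/
noncomputable def Spp (u τ : ℂ) : ℂ := deriv (fun v => Sp v τ) u
/-- S'''(u,τ) = ∂_u S''(u,τ). -/
noncomputable def Sppp (u τ : ℂ) : ℂ := deriv (fun v => Spp v τ) u

/-- Partial derivative in the j-th coordinate of a ℂ-valued function on ℝ^N. -/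
noncomputable def pdC {N : ℕ} (j : Fin N) (f : (Fin N → ℝ) → ℂ) (x : Fin N → ℝ) : ℂ :=
  fderiv ℝ f x (Pi.single j 1)

/-- Partial derivative in the j-th coordinate of an ℝ-valued function on ℝ^d. -/
noncomputable def pd {d : ℕ} (j : Fin d) (f : (Fin d → ℝ) → ℝ) (x : Fin d → ℝ) : ℝ :=
  fderiv ℝ f x (Pi.single j 1)

/-!
Splitting the double series of a product of two theta functions by the parity of the difference of
its indices expresses it through theta functions of `2 * τ`. Differentiating the resulting formula
for `θ₂(x, τ) θ₁(y, τ)` in `y` at `y = 0` identifies `θ₁' θ₄ - θ₁ θ₄'` at `2 * τ` with a multiple of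
`θ₂(u, τ)`, the constant being `θ₁'(0, τ) / 2`. Jacobi's derivative formula
`θ₁'(0) = π θ₂(0) θ₃(0) θ₄(0)` evaluates this constant: by the doubling relations, the quotient of
its two sides is invariant under `τ ↦ 2 * τ`, so it equals its limit as `im τ → ∞`. Dividing by
`θ₁ θ₄` at `2 * τ`, a multiple of `θ₁(u, τ)`, gives both forms.
-/

open Filter Topology
open scoped Real

section Summation

variable {E : Type*} [AddCommGroup E] [UniformSpace E] [IsUniformAddGroup E] [CompleteSpace E]
  [T2Space E]

lemma tsum_int_even_add_odd {f : ℤ → E} (hf : Summable f) :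
    ∑' k, f (2 * k) + ∑' k, f (2 * k + 1) = ∑' k, f k := by
  have h_even : Function.Injective fun k : ℤ => 2 * k := mul_right_injective₀ two_ne_zero
  have h_odd : Function.Injective fun k : ℤ => 2 * k + 1 := (add_left_injective 1).comp h_even
  have h_compl : IsCompl (Set.range fun k : ℤ => 2 * k) (Set.range fun k : ℤ => 2 * k + 1) := by
    simpa using Int.isCompl_even_odd
  rw [← hf.tsum_subtype_add_tsum_subtype_compl (Set.range fun k : ℤ => 2 * k),
    h_compl.compl_eq, tsum_range f h_even, tsum_range f h_odd]

lemma tsum_int_prod_eq_add {f : ℤ × ℤ → E} (hf : Summable f) :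
    ∑' p, f p = ∑' n, ∑' m, f (m + n, m - n) + ∑' n, ∑' m, f (m + n + 1, m - n) := by
  let shear : ℤ × ℤ ≃ ℤ × ℤ :=
    ⟨fun p => (p.2 + p.1, p.2), fun p => (p.1 - p.2, p.2), fun p => by simp, fun p => by simp⟩
  have h_shear : Summable fun p : ℤ × ℤ => f (p.2 + p.1, p.2) := shear.summable_iff.2 hf
  have h_even (n : ℤ) : ∑' l, f (l + 2 * n, l) = ∑' m, f (m + n, m - n) := by
    rw [← (Equiv.subRight n).tsum_eq]
    exact tsum_congr fun m => by rw [Equiv.subRight_apply]; ring_nf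
  have h_odd (n : ℤ) : ∑' l, f (l + (2 * n + 1), l) = ∑' m, f (m + n + 1, m - n) := by
    rw [← (Equiv.subRight n).tsum_eq]
    exact tsum_congr fun m => by rw [Equiv.subRight_apply]; ring_nf
  rw [← shear.tsum_eq]
  refine h_shear.tsum_prod.trans ?_
  simp only [← tsum_int_even_add_odd h_shear.prod, h_even, h_odd]

end Summation

section CuspLimit

lemma norm_exp_pi_mul_I_mul_mul (τ : ℂ) (a : ℝ) :
    ‖exp (π * I * τ * a)‖ = Real.exp (-(π * τ.im * a)) := by
  rw [norm_exp]
  simp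

lemma tendsto_exp_pi_mul_I_mul_mul {a : ℝ} (ha : 0 < a) :
    Tendsto (fun τ : ℂ => exp (π * I * τ * a)) (comap im atTop) (𝓝 0) := by
  rw [tendsto_zero_iff_norm_tendsto_zero]
  simp only [norm_exp_pi_mul_I_mul_mul]
  exact Real.tendsto_exp_neg_atTop_nhds_zero.comp
    ((tendsto_comap.const_mul_atTop Real.pi_pos).atTop_mul_const ha)

lemma tendsto_tsum_mul_exp_comap_im_atTop {ι : Type*} {w : ι → ℂ} {a : ι → ℝ}
    (ha : ∀ i, 0 ≤ a i) {s : Finset ι} (hs : ∀ i, a i = 0 ↔ i ∈ s) {τ₀ : ℂ}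
    (hw : Summable fun i => w i * exp (π * I * τ₀ * a i)) :
    Tendsto (fun τ : ℂ => ∑' i, w i * exp (π * I * τ * a i)) (comap im atTop)
      (𝓝 (∑ i ∈ s, w i)) := by
  rw [sum_eq_tsum_indicator]
  refine tendsto_tsum_of_dominated_convergence hw.norm (fun i => ?_) ?_
  · by_cases hi : i ∈ s
    · simp [hi, (hs i).2 hi, tendsto_const_nhds]
    · have ha_pos : 0 < a i := (ha i).lt_of_ne' (mt (hs i).1 hi)
      simpa [hi] using (tendsto_exp_pi_mul_I_mul_mul ha_pos).const_mul (w i)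
  · filter_upwards [tendsto_comap.eventually_ge_atTop τ₀.im] with τ hτ i
    rw [norm_mul, norm_mul, norm_exp_pi_mul_I_mul_mul, norm_exp_pi_mul_I_mul_mul]
    have := ha i
    gcongr

lemma tendsto_two_pow_mul_comap_im_atTop {τ : ℂ} (hτ : 0 < τ.im) :
    Tendsto (fun n : ℕ => 2 ^ n * τ) atTop (comap im atTop) := by
  have h_im (n : ℕ) : ((2 : ℂ) ^ n * τ).im = 2 ^ n * τ.im := by
    exact_mod_cast im_ofReal_mul (2 ^ n) τ
  refine tendsto_comap_iff.2 ?_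
  simp only [Function.comp_def, h_im]
  exact (tendsto_pow_atTop_atTop_of_one_lt one_lt_two).atTop_mul_const hτ

lemma of_eventually_comap_im_atTop_of_two_mul {P : ℂ → Prop}
    (h_half : ∀ τ : ℂ, 0 < τ.im → P (2 * τ) → P τ) (h_cusp : ∀ᶠ τ in comap im atTop, P τ)
    {τ : ℂ} (hτ : 0 < τ.im) : P τ := by
  have h_descent (n : ℕ) : ∀ {σ : ℂ}, 0 < σ.im → P (2 ^ n * σ) → P σ := by
    induction n with
    | zero => simp
    | succ n ih =>
      intro σ hσ h
      refine h_half σ hσ (ih (by simpa using hσ) ?_)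
      rwa [← mul_assoc, ← pow_succ]
  obtain ⟨n, hn⟩ := ((tendsto_two_pow_mul_comap_im_atTop hτ).eventually h_cusp).exists
  exact h_descent n hτ hn

lemma eq_of_tendsto_comap_im_atTop_of_two_mul {X : Type*} [TopologicalSpace X] [T2Space X]
    {f : ℂ → X} {c : X} (h_double : ∀ τ : ℂ, 0 < τ.im → f (2 * τ) = f τ)
    (h_cusp : Tendsto f (comap im atTop) (𝓝 c)) {τ : ℂ} (hτ : 0 < τ.im) : f τ = c := by
  by_contra h_ne
  exact of_eventually_comap_im_atTop_of_two_mul (P := fun σ => f σ ≠ f τ)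
    (fun σ hσ h => h_double σ hσ ▸ h) (h_cusp.eventually_ne (Ne.symm h_ne)) hτ rfl

end CuspLimit

section Characteristics

/-- The `k`-th term of `thetaChar a u τ`. -/
noncomputable def thetaCharTerm (a : ℂ) (k : ℤ) (u τ : ℂ) : ℂ :=
  exp (π * I * τ * (k + a) ^ 2 + 2 * π * I * u * (k + a))

/-- The theta function with characteristic `a`, the common form of `theta3` (`a = 0`) and `theta2`
(`a = 1/2`). The usual second characteristic is absorbed in a translation of `u`. -/
noncomputable def thetaChar (a u τ : ℂ) : ℂ :=
  ∑' k : ℤ, thetaCharTerm a k u τ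

lemma thetaCharTerm_add_one (a : ℂ) (k : ℤ) (u τ : ℂ) :
    thetaCharTerm a (k + 1) u τ = thetaCharTerm (a + 1) k u τ := by
  rw [thetaCharTerm, thetaCharTerm, Int.cast_add, Int.cast_one, add_assoc, add_comm 1 a]

lemma thetaCharTerm_eq_mul_jacobiTheta₂_term (a : ℂ) (k : ℤ) (u τ : ℂ) :
    thetaCharTerm a k u τ =
      exp (π * I * τ * a ^ 2 + 2 * π * I * u * a) * jacobiTheta₂_term k (u + a * τ) τ := by
  rw [thetaCharTerm, jacobiTheta₂_term, ← exp_add]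
  ring_nf

lemma thetaChar_eq_mul_jacobiTheta₂ (a u τ : ℂ) :
    thetaChar a u τ =
      exp (π * I * τ * a ^ 2 + 2 * π * I * u * a) * jacobiTheta₂ (u + a * τ) τ := by
  simp only [thetaChar, thetaCharTerm_eq_mul_jacobiTheta₂_term, tsum_mul_left, jacobiTheta₂]

variable {τ : ℂ}

lemma summable_thetaCharTerm (a u : ℂ) (hτ : 0 < τ.im) :
    Summable fun k => thetaCharTerm a k u τ := by
  simp only [thetaCharTerm_eq_mul_jacobiTheta₂_term]
  exact (hasSum_jacobiTheta₂_term _ hτ).summable.mul_left _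

lemma hasSum_mul_thetaCharTerm (a u : ℂ) (hτ : 0 < τ.im) :
    HasSum (fun k : ℤ => 2 * π * I * (k + a) * thetaCharTerm a k u τ)
      (exp (π * I * τ * a ^ 2 + 2 * π * I * u * a) *
        (2 * π * I * a * jacobiTheta₂ (u + a * τ) τ + jacobiTheta₂' (u + a * τ) τ)) := by
  have h := (((hasSum_jacobiTheta₂_term (u + a * τ) hτ).mul_left (2 * π * I * a)).add
    (hasSum_jacobiTheta₂'_term (u + a * τ) hτ)).mul_left
      (exp (π * I * τ * a ^ 2 + 2 * π * I * u * a))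
  refine h.congr_fun fun k => ?_
  rw [thetaCharTerm_eq_mul_jacobiTheta₂_term, jacobiTheta₂'_term]
  ring

lemma hasDerivAt_thetaChar (a u : ℂ) (hτ : 0 < τ.im) :
    HasDerivAt (fun v => thetaChar a v τ)
      (∑' k : ℤ, 2 * π * I * (k + a) * thetaCharTerm a k u τ) u := by
  simp only [thetaChar_eq_mul_jacobiTheta₂, (hasSum_mul_thetaCharTerm a u hτ).tsum_eq]
  have h_exp : HasDerivAt (fun v => exp (π * I * τ * a ^ 2 + 2 * π * I * v * a))
      (exp (π * I * τ * a ^ 2 + 2 * π * I * u * a) * (2 * π * I * a)) u := by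
    simpa using
      ((((hasDerivAt_id u).const_mul (2 * π * I)).mul_const a).const_add (π * I * τ * a ^ 2)).cexp
  have h_theta : HasDerivAt (fun v => jacobiTheta₂ (v + a * τ) τ)
      (jacobiTheta₂' (u + a * τ) τ) u :=
    (hasDerivAt_jacobiTheta₂_fst (u + a * τ) hτ).comp_add_const u (a * τ)
  exact (h_exp.mul h_theta).congr_deriv (by ring)

lemma thetaChar_char_add_one (a u τ : ℂ) : thetaChar (a + 1) u τ = thetaChar a u τ := by
  rw [thetaChar, thetaChar, ← (Equiv.addRight (1 : ℤ)).tsum_eq fun k => thetaCharTerm a k u τ]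
  exact tsum_congr fun k => (thetaCharTerm_add_one a k u τ).symm

lemma thetaChar_neg_neg (a u τ : ℂ) : thetaChar (-a) (-u) τ = thetaChar a u τ := by
  rw [thetaChar, thetaChar, ← (Equiv.neg ℤ).tsum_eq fun k => thetaCharTerm a k u τ]
  refine tsum_congr fun k => ?_
  simp only [thetaCharTerm, Equiv.neg_apply]
  push_cast
  ring_nf

lemma thetaChar_add_one (a u τ : ℂ) :
    thetaChar a (u + 1) τ = exp (2 * π * I * a) * thetaChar a u τ := by
  rw [thetaChar, thetaChar, ← tsum_mul_left]
  refine tsum_congr fun k => ?_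
  rw [thetaCharTerm, thetaCharTerm, ← exp_add, exp_eq_exp_iff_exists_int]
  exact ⟨k, by ring⟩

/-- The exponents match by the parallelogram law for `m + s` and `n + d`. -/
lemma thetaCharTerm_add_mul_thetaCharTerm_sub (s d : ℂ) (m n : ℤ) (x y τ : ℂ) :
    thetaCharTerm (s + d) (m + n) x τ * thetaCharTerm (s - d) (m - n) y τ =
      thetaCharTerm s m (x + y) (2 * τ) * thetaCharTerm d n (x - y) (2 * τ) := by
  rw [thetaCharTerm, thetaCharTerm, thetaCharTerm, thetaCharTerm, ← exp_add, ← exp_add]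
  congr 1
  push_cast
  ring

lemma thetaChar_mul_thetaChar (a b x y : ℂ) (hτ : 0 < τ.im) :
    thetaChar a x τ * thetaChar b y τ =
      thetaChar ((a + b) / 2) (x + y) (2 * τ) * thetaChar ((a - b) / 2) (x - y) (2 * τ) +
        thetaChar ((a + b + 1) / 2) (x + y) (2 * τ) *
          thetaChar ((a - b + 1) / 2) (x - y) (2 * τ) := by
  have h_prod (a b : ℂ) : ∑' n : ℤ, ∑' m : ℤ,
      thetaCharTerm a (m + n) x τ * thetaCharTerm b (m - n) y τ =
        thetaChar ((a + b) / 2) (x + y) (2 * τ) * thetaChar ((a - b) / 2) (x - y) (2 * τ) := by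
    obtain ⟨s, d, rfl, rfl⟩ : ∃ s d, a = s + d ∧ b = s - d :=
      ⟨(a + b) / 2, (a - b) / 2, by ring, by ring⟩
    have h_s : (s + d + (s - d)) / 2 = s := by ring
    have h_d : (s + d - (s - d)) / 2 = d := by ring
    simp only [thetaCharTerm_add_mul_thetaCharTerm_sub, tsum_mul_left, tsum_mul_right, thetaChar,
      h_s, h_d]
  have h_left := (summable_thetaCharTerm a x hτ).norm
  have h_right := (summable_thetaCharTerm b y hτ).norm
  have h_summable : Summable fun p : ℤ × ℤ => thetaCharTerm a p.1 x τ * thetaCharTerm b p.2 y τ :=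
    summable_mul_of_summable_norm (f := (thetaCharTerm a · x τ)) (g := (thetaCharTerm b · y τ))
      h_left h_right
  refine (tsum_mul_tsum_of_summable_norm h_left h_right).trans
    ((tsum_int_prod_eq_add h_summable).trans ?_)
  simp only [thetaCharTerm_add_one, h_prod, add_right_comm a 1 b, add_sub_right_comm]

end Characteristics

section Jacobi

lemma theta2_eq_thetaChar (u τ : ℂ) : theta2 u τ = thetaChar (1 / 2) u τ := rfl

lemma theta3_eq_thetaChar (u τ : ℂ) : theta3 u τ = thetaChar 0 u τ := by
  simp only [theta3, thetaChar, thetaCharTerm, add_zero]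

lemma theta1_eq_neg_theta2 (u τ : ℂ) : theta1 u τ = -theta2 (u + 1 / 2) τ := rfl

lemma theta4_eq_theta3 (u τ : ℂ) : theta4 u τ = theta3 (u + 1 / 2) τ := rfl

lemma theta2_neg (u τ : ℂ) : theta2 (-u) τ = theta2 u τ := by
  rw [theta2_eq_thetaChar, theta2_eq_thetaChar, ← thetaChar_neg_neg, neg_neg,
    ← thetaChar_char_add_one]
  norm_num

lemma theta2_add_one (u τ : ℂ) : theta2 (u + 1) τ = -theta2 u τ := by
  have h_exp : exp (2 * π * I * (1 / 2)) = -1 := by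
    rw [← exp_pi_mul_I]
    ring_nf
  rw [theta2_eq_thetaChar, theta2_eq_thetaChar, thetaChar_add_one, h_exp, neg_one_mul]

lemma theta3_add_one (u τ : ℂ) : theta3 (u + 1) τ = theta3 u τ := by
  simp [theta3_eq_thetaChar, thetaChar_add_one]

lemma theta2_sub_half (u τ : ℂ) : theta2 (u - 1 / 2) τ = theta1 u τ := by
  rw [theta1_eq_neg_theta2, ← neg_eq_iff_eq_neg, ← theta2_add_one]
  ring_nf

lemma theta3_sub_half (u τ : ℂ) : theta3 (u - 1 / 2) τ = theta4 u τ := by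
  rw [theta4_eq_theta3, ← theta3_add_one]
  ring_nf

lemma theta1_zero (τ : ℂ) : theta1 0 τ = 0 := by
  have h_neg : theta1 0 τ = -theta1 0 τ := by
    conv_lhs => rw [← theta2_sub_half, zero_sub, theta2_neg]
    rw [theta1_eq_neg_theta2, zero_add, neg_neg]
  exact self_eq_neg.1 h_neg

variable {τ : ℂ}

lemma hasDerivAt_theta2 (u : ℂ) (hτ : 0 < τ.im) :
    HasDerivAt (fun v => theta2 v τ)
      (∑' k : ℤ, 2 * π * I * (k + 1 / 2) * thetaCharTerm (1 / 2) k u τ) u :=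
  hasDerivAt_thetaChar (1 / 2) u hτ

lemma differentiableAt_theta1 (u : ℂ) (hτ : 0 < τ.im) :
    DifferentiableAt ℂ (fun v => theta1 v τ) u :=
  ((hasDerivAt_theta2 (u + 1 / 2) hτ).comp_add_const u (1 / 2)).neg.differentiableAt

lemma differentiableAt_theta4 (u : ℂ) (hτ : 0 < τ.im) :
    DifferentiableAt ℂ (fun v => theta4 v τ) u := by
  simp only [theta4_eq_theta3, theta3_eq_thetaChar]
  exact ((hasDerivAt_thetaChar 0 (u + 1 / 2) hτ).comp_add_const u (1 / 2)).differentiableAt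

lemma theta2_mul_theta2 (x y : ℂ) (hτ : 0 < τ.im) :
    theta2 x τ * theta2 y τ =
      theta3 (x + y) (2 * τ) * theta2 (x - y) (2 * τ) +
        theta2 (x + y) (2 * τ) * theta3 (x - y) (2 * τ) := by
  have h_one (u τ : ℂ) : thetaChar 1 u τ = theta3 u τ := by
    rw [theta3_eq_thetaChar, ← thetaChar_char_add_one 0, zero_add]
  have h := thetaChar_mul_thetaChar (1 / 2) (1 / 2) x y hτ
  norm_num only [h_one, ← theta2_eq_thetaChar, ← theta3_eq_thetaChar] at h
  rw [h, add_comm]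

lemma theta3_mul_theta3 (x y : ℂ) (hτ : 0 < τ.im) :
    theta3 x τ * theta3 y τ =
      theta3 (x + y) (2 * τ) * theta3 (x - y) (2 * τ) +
        theta2 (x + y) (2 * τ) * theta2 (x - y) (2 * τ) := by
  simpa [theta3_eq_thetaChar, theta2_eq_thetaChar] using thetaChar_mul_thetaChar 0 0 x y hτ

lemma theta2_mul_theta1 (x y : ℂ) (hτ : 0 < τ.im) :
    theta2 x τ * theta1 y τ =
      theta1 (x + y) (2 * τ) * theta4 (x - y) (2 * τ) -
        theta1 (x - y) (2 * τ) * theta4 (x + y) (2 * τ) := by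
  rw [theta1_eq_neg_theta2 y, mul_neg, theta2_mul_theta2 x (y + 1 / 2) hτ, ← add_assoc, ← sub_sub,
    theta2_sub_half, theta3_sub_half, ← theta4_eq_theta3, theta1_eq_neg_theta2 (x + y)]
  ring

lemma two_mul_theta2_mul_theta3 (u : ℂ) (hτ : 0 < τ.im) :
    2 * (theta2 u (2 * τ) * theta3 u (2 * τ)) = theta2 0 τ * theta2 u τ := by
  have h := theta2_mul_theta2 u 0 hτ
  rw [add_zero, sub_zero] at h
  linear_combination -h

lemma two_mul_theta1_mul_theta4 (u : ℂ) (hτ : 0 < τ.im) :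
    2 * (theta1 u (2 * τ) * theta4 u (2 * τ)) = theta2 0 τ * theta1 u τ := by
  simp only [theta1_eq_neg_theta2, theta4_eq_theta3]
  linear_combination -two_mul_theta2_mul_theta3 (u + 1 / 2) hτ

lemma theta4_zero_two_mul_sq (hτ : 0 < τ.im) :
    theta4 0 (2 * τ) ^ 2 = theta3 0 τ * theta4 0 τ := by
  have h := theta3_mul_theta3 (1 / 2) 0 hτ
  have h_vanish : theta2 (1 / 2) (2 * τ) = 0 := by
    rw [← zero_add (1 / 2 : ℂ), ← neg_eq_zero, ← theta1_eq_neg_theta2, theta1_zero]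
  rw [add_zero, sub_zero, h_vanish] at h
  rw [theta4_eq_theta3, theta4_eq_theta3, zero_add]
  linear_combination -h

lemma two_mul_theta1_theta4_wronskian (u : ℂ) (hτ : 0 < τ.im) :
    2 * (deriv (fun v => theta1 v (2 * τ)) u * theta4 u (2 * τ) -
        theta1 u (2 * τ) * deriv (fun v => theta4 v (2 * τ)) u) =
      theta2 u τ * deriv (fun v => theta1 v τ) 0 := by
  have h2τ : 0 < (2 * τ).im := by simpa using hτ
  have h1 (v : ℂ) := (differentiableAt_theta1 v h2τ).hasDerivAt
  have h4 (v : ℂ) := (differentiableAt_theta4 v h2τ).hasDerivAt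
  have h_left := ((differentiableAt_theta1 0 hτ).hasDerivAt).const_mul (theta2 u τ)
  have h_right := (((h1 _).comp_const_add u 0).fun_mul ((h4 _).comp_const_sub u 0)).fun_sub
    (((h1 _).comp_const_sub u 0).fun_mul ((h4 _).comp_const_add u 0))
  have h := h_left.unique (h_right.congr_of_eventuallyEq
    (.of_forall fun y => theta2_mul_theta1 u y hτ))
  simp only [add_zero, sub_zero] at h
  linear_combination -h

end Jacobi

section ThetaConstants

lemma tendsto_theta3_comap_im_atTop (u : ℂ) :
    Tendsto (fun τ => theta3 u τ) (comap im atTop) (𝓝 1) := by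
  have h_term (k : ℤ) (τ : ℂ) :
      thetaCharTerm 0 k u τ = exp (2 * π * I * u * k) * exp (π * I * τ * ((k : ℝ) ^ 2 : ℝ)) := by
    rw [thetaCharTerm, ← exp_add]
    push_cast
    ring_nf
  have h_lim := tendsto_tsum_mul_exp_comap_im_atTop (fun k : ℤ => sq_nonneg (k : ℝ))
    (s := {0}) (by simp)
    ((summable_thetaCharTerm 0 u (τ := I) (by simp)).congr fun k => h_term k I)
  simp only [← h_term] at h_lim
  simpa [theta3_eq_thetaChar, thetaChar] using h_lim

lemma tendsto_theta4_comap_im_atTop (u : ℂ) :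
    Tendsto (fun τ => theta4 u τ) (comap im atTop) (𝓝 1) :=
  tendsto_theta3_comap_im_atTop (u + 1 / 2)

/-- The exponents `(k + 1/2) ^ 2` are smallest, equal to `1/4`, at `k = 0` and `k = -1`. -/
lemma tendsto_exp_mul_tsum_mul_thetaCharTerm_half {w : ℤ → ℂ} {u τ₀ : ℂ}
    (hw : Summable fun k => w k * thetaCharTerm (1 / 2) k u τ₀) :
    Tendsto (fun τ => exp (-(π * I * τ / 4)) * ∑' k, w k * thetaCharTerm (1 / 2) k u τ)
      (comap im atTop) (𝓝 (w 0 * exp (π * u * I) + w (-1) * exp (-(π * u) * I))) := by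
  have h_term (k : ℤ) (τ : ℂ) : exp (-(π * I * τ / 4)) * (w k * thetaCharTerm (1 / 2) k u τ) =
      w k * exp (2 * π * I * u * (k + 1 / 2)) * exp (π * I * τ * ((k * (k + 1) : ℤ) : ℝ)) := by
    rw [thetaCharTerm, mul_left_comm, ← exp_add, mul_assoc (w k), ← exp_add]
    push_cast
    ring_nf
  have h_nonneg (k : ℤ) : (0 : ℝ) ≤ ((k * (k + 1) : ℤ) : ℝ) := by
    have : 0 ≤ k * (k + 1) := by
      rcases le_or_gt 0 k with hk | hk <;> nlinarith
    exact_mod_cast this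
  have h_zero (k : ℤ) : ((k * (k + 1) : ℤ) : ℝ) = 0 ↔ k ∈ ({0, -1} : Finset ℤ) := by
    rw [Int.cast_eq_zero, mul_eq_zero, ← eq_neg_iff_add_eq_zero]
    simp
  have h_lim := tendsto_tsum_mul_exp_comap_im_atTop h_nonneg h_zero
    ((hw.mul_left (exp (-(π * I * τ₀ / 4)))).congr fun k => h_term k τ₀)
  simp only [← h_term, tsum_mul_left] at h_lim
  convert h_lim using 2
  rw [Finset.sum_pair (by norm_num)]
  push_cast
  ring_nf

lemma tendsto_exp_mul_theta2_comap_im_atTop (u : ℂ) :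
    Tendsto (fun τ => exp (-(π * I * τ / 4)) * theta2 u τ) (comap im atTop)
      (𝓝 (2 * cos (π * u))) := by
  have h_summable := summable_thetaCharTerm (1 / 2) u (τ := I) (by simp)
  have h_lim := tendsto_exp_mul_tsum_mul_thetaCharTerm_half (w := fun _ => 1) (u := u) (τ₀ := I)
    (by simpa using h_summable)
  simpa [theta2_eq_thetaChar, thetaChar, two_cos] using h_lim

lemma tendsto_exp_mul_deriv_theta2_comap_im_atTop (u : ℂ) :
    Tendsto (fun τ => exp (-(π * I * τ / 4)) * deriv (fun v => theta2 v τ) u) (comap im atTop)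
      (𝓝 (-(2 * π * sin (π * u)))) := by
  have h_lim := tendsto_exp_mul_tsum_mul_thetaCharTerm_half
    (hasSum_mul_thetaCharTerm (1 / 2) u (τ := I) (by simp)).summable
  have h_sin : -(2 * π * sin (π * u)) =
      2 * π * I * ((0 : ℤ) + 1 / 2) * exp (π * u * I) +
        2 * π * I * ((-1 : ℤ) + 1 / 2) * exp (-(π * u) * I) := by
    rw [sin]
    push_cast
    ring
  rw [h_sin]
  refine h_lim.congr' ?_
  filter_upwards [tendsto_comap.eventually_gt_atTop 0] with τ hτ
  rw [(hasDerivAt_theta2 u hτ).deriv]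

lemma tendsto_exp_mul_deriv_theta1_zero_comap_im_atTop :
    Tendsto (fun τ => exp (-(π * I * τ / 4)) * deriv (fun v => theta1 v τ) 0) (comap im atTop)
      (𝓝 (2 * π)) := by
  have h_deriv (τ : ℂ) :
      deriv (fun v => theta1 v τ) 0 = -deriv (fun v => theta2 v τ) (1 / 2) := by
    simp only [theta1_eq_neg_theta2, deriv.fun_neg]
    rw [deriv_comp_add_const (f := fun v => theta2 v τ), zero_add]
  have h_lim := (tendsto_exp_mul_deriv_theta2_comap_im_atTop (1 / 2)).neg
  simpa [h_deriv, ← div_eq_mul_inv] using h_lim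

variable {τ : ℂ}

lemma theta4_zero_ne_zero (hτ : 0 < τ.im) : theta4 0 τ ≠ 0 := by
  refine of_eventually_comap_im_atTop_of_two_mul (P := fun σ => theta4 0 σ ≠ 0)
    (fun σ hσ h => ?_) ((tendsto_theta4_comap_im_atTop 0).eventually_ne one_ne_zero) hτ
  exact right_ne_zero_of_mul (theta4_zero_two_mul_sq hσ ▸ pow_ne_zero 2 h)

lemma theta3_zero_ne_zero (hτ : 0 < τ.im) : theta3 0 τ ≠ 0 :=
  left_ne_zero_of_mul <| theta4_zero_two_mul_sq hτ ▸
    pow_ne_zero 2 (theta4_zero_ne_zero (τ := 2 * τ) (by simpa using hτ))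

lemma theta2_zero_ne_zero (hτ : 0 < τ.im) : theta2 0 τ ≠ 0 := by
  refine of_eventually_comap_im_atTop_of_two_mul (P := fun σ => theta2 0 σ ≠ 0)
    (fun σ hσ h => ?_) ?_ hτ
  · have h3 : theta3 0 (2 * σ) ≠ 0 := theta3_zero_ne_zero (by simpa using hσ)
    exact left_ne_zero_of_mul <|
      two_mul_theta2_mul_theta3 0 hσ ▸ mul_ne_zero two_ne_zero (mul_ne_zero h h3)
  · exact ((tendsto_exp_mul_theta2_comap_im_atTop 0).eventually_ne (by simp)).mono
      fun σ => right_ne_zero_of_mul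

theorem deriv_theta1_zero (hτ : 0 < τ.im) :
    deriv (fun v => theta1 v τ) 0 = π * (theta2 0 τ * theta3 0 τ * theta4 0 τ) := by
  have h_ne {σ : ℂ} (hσ : 0 < σ.im) : theta2 0 σ * theta3 0 σ * theta4 0 σ ≠ 0 :=
    mul_ne_zero (mul_ne_zero (theta2_zero_ne_zero hσ) (theta3_zero_ne_zero hσ))
      (theta4_zero_ne_zero hσ)
  let r (σ : ℂ) : ℂ := deriv (fun v => theta1 v σ) 0 / (theta2 0 σ * theta3 0 σ * theta4 0 σ)
  have h_double (σ : ℂ) (hσ : 0 < σ.im) : r (2 * σ) = r σ := by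
    have h2σ : 0 < (2 * σ).im := by simpa using hσ
    have h_wronskian := two_mul_theta1_theta4_wronskian 0 hσ
    rw [theta1_zero, zero_mul, sub_zero] at h_wronskian
    rw [div_eq_div_iff (h_ne h2σ) (h_ne hσ)]
    apply mul_left_cancel₀ (mul_ne_zero two_ne_zero (theta4_zero_ne_zero h2σ))
    linear_combination (theta2 0 σ * theta3 0 σ * theta4 0 σ) * h_wronskian -
      deriv (fun v => theta1 v σ) 0 * theta4 0 (2 * σ) ^ 2 * two_mul_theta2_mul_theta3 0 hσ -
      deriv (fun v => theta1 v σ) 0 * theta2 0 σ ^ 2 * theta4_zero_two_mul_sq hσ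
  have h_cusp : Tendsto r (comap im atTop) (𝓝 π) := by
    have h_lim := tendsto_exp_mul_deriv_theta1_zero_comap_im_atTop.div
      (((tendsto_exp_mul_theta2_comap_im_atTop 0).mul (tendsto_theta3_comap_im_atTop 0)).mul
        (tendsto_theta4_comap_im_atTop 0)) (by simp)
    simpa [r, Pi.div_def, mul_assoc, mul_div_mul_left] using h_lim
  exact (div_eq_iff (h_ne hτ)).1 (eq_of_tendsto_comap_im_atTop_of_two_mul h_double h_cusp hτ)

lemma theta1_theta4_wronskian (u : ℂ) (hτ : 0 < τ.im) :
    deriv (fun v => theta1 v (2 * τ)) u * theta4 u (2 * τ) -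
        theta1 u (2 * τ) * deriv (fun v => theta4 v (2 * τ)) u =
      π * theta4 0 (2 * τ) ^ 2 * (theta2 u (2 * τ) * theta3 u (2 * τ)) := by
  have h_wronskian := two_mul_theta1_theta4_wronskian u hτ
  rw [deriv_theta1_zero hτ] at h_wronskian
  linear_combination h_wronskian / 2 -
    π * theta4 0 (2 * τ) ^ 2 / 2 * two_mul_theta2_mul_theta3 u hτ -
    π * theta2 0 τ * theta2 u τ / 2 * theta4_zero_two_mul_sq hτ

end ThetaConstants

/-- Theta representation and Landen-type identity for S' (formula (n2)). -/
theorem Sp_theta_representation (τ u : ℂ) (hτ : 0 < τ.im)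
    (h1 : theta1 u τ * theta4 u τ ≠ 0)
    (h2 : theta1 u (τ / 2) ≠ 0) :
    zeta1 u τ - zeta4 u τ
        = (Real.pi : ℂ) * theta4 0 τ ^ 2 * (theta2 u τ * theta3 u τ)
            / (theta1 u τ * theta4 u τ)
    ∧ zeta1 u τ - zeta4 u τ
        = (Real.pi : ℂ) * theta3 0 (τ / 2) * theta4 0 (τ / 2)
            * theta2 u (τ / 2) / theta1 u (τ / 2) := by
  obtain ⟨σ, rfl⟩ : ∃ σ, τ = 2 * σ := ⟨τ / 2, by ring⟩
  rw [mul_div_cancel_left₀ σ two_ne_zero] at h2 ⊢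
  have hσ : 0 < σ.im := by simpa using hτ
  have h_sub : zeta1 u (2 * σ) - zeta4 u (2 * σ) =
      π * theta4 0 (2 * σ) ^ 2 * (theta2 u (2 * σ) * theta3 u (2 * σ)) /
        (theta1 u (2 * σ) * theta4 u (2 * σ)) := by
    rw [zeta1, zeta4, div_sub_div _ _ (left_ne_zero_of_mul h1) (right_ne_zero_of_mul h1),
      theta1_theta4_wronskian u hσ]
  refine ⟨h_sub, h_sub.trans ?_⟩
  rw [div_eq_div_iff h1 h2, theta4_zero_two_mul_sq hσ]
  apply mul_left_cancel₀ (two_ne_zero' ℂ)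
  linear_combination π * theta3 0 σ * theta4 0 σ *
    (theta1 u σ * two_mul_theta2_mul_theta3 u hσ - theta2 u σ * two_mul_theta1_mul_theta4 u hσ)
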